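/- For all α, β, γ, δ ∈ (0, π/2), the state ρ is entangled (not separable) across the AB:CD bipartition: there do not exist a natural number n, nonnegative reals p₁,…,p_n, and vectors u_t, w_t : Fin 2 × Fin 2 → ℂ (t = 1,…,n) such that ρ = Σ_t p_t · P_t, where P_t is the rank-one matrix of the product vector v_t (i,j,k,l) := u_t (i,j) · w_t (k,l), i.e. P_t (x,y) = v_t x · conj(v_t y). Consequently ρ is also entangled across the A:B:CD grouping and as a 4-qubit state. -/

import Mathlib

/-- The 4-qubit index type. -/
abbrev Q4 : Type := Fin 2 × Fin 2 × Fin 2 × Fin 2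

/-- The standard inner product on the 4-qubit space `Q4 → ℂ`. -/
noncomputable def ip (v w : Q4 → ℂ) : ℂ := ∑ x, (starRingEnd ℂ) (v x) * w x

/-- The 4-qubit product vector `|x,y,z,w⟩`. -/
def pv (x y z w : Fin 2 → ℂ) : Q4 → ℂ := fun p => x p.1 * y p.2.1 * z p.2.2.1 * w p.2.2.2

/-- `|0⟩`. -/
def ket0 : Fin 2 → ℂ := ![1, 0]

/-- `|1⟩`. -/
def ket1 : Fin 2 → ℂ := ![0, 1]

/-- `(cos t, sin t)` as a qubit state. -/
noncomputable def vk (t : ℝ) : Fin 2 → ℂ := ![(Real.cos t : ℂ), (Real.sin t : ℂ)]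

/-- `(sin t, −cos t)` as a qubit state, orthogonal to `vk t`. -/
noncomputable def vk' (t : ℝ) : Fin 2 → ℂ := ![(Real.sin t : ℂ), -(Real.cos t : ℂ)]

/-- The 4-qubit UPB of size 9:
`{|0,0,1,d⟩, |0,1,c,0⟩, |0,b,0,1⟩, |1,1,0,d⟩, |1,b,1,0⟩, |1,0,c,1⟩, |a,0,0,0⟩,
 |a,1,1,1⟩, |a',b',c',d'⟩}`. -/
noncomputable def S9 (α β γ δ : ℝ) : Fin 9 → Q4 → ℂ :=
  ![pv ket0 ket0 ket1 (vk δ),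
    pv ket0 ket1 (vk γ) ket0,
    pv ket0 (vk β) ket0 ket1,
    pv ket1 ket1 ket0 (vk δ),
    pv ket1 (vk β) ket1 ket0,
    pv ket1 ket0 (vk γ) ket1,
    pv (vk α) ket0 ket0 ket0,
    pv (vk α) ket1 ket1 ket1,
    pv (vk' α) (vk' β) (vk' γ) (vk' δ)]

/-- The 4-qubit state `ρ := (1/7)(1 − Σ_{v ∈ S₉} vv*)`, a `16 × 16` complex matrix. -/
noncomputable def rho (α β γ δ : ℝ) : Matrix Q4 Q4 ℂ :=
  (1 / 7 : ℂ) •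
    ((1 : Matrix Q4 Q4 ℂ) -
      ∑ t : Fin 9, Matrix.of fun x y : Q4 => S9 α β γ δ t x * (starRingEnd ℂ) (S9 α β γ δ t y))

/-- The rank-one matrix `vv*` of a vector `v`. -/
noncomputable def rankOne (v : Q4 → ℂ) : Matrix Q4 Q4 ℂ :=
  Matrix.of fun x y : Q4 => v x * (starRingEnd ℂ) (v y)

/-!
A positive combination of projectors `v v*` that annihilates a vector `s` uses only vectors `v`
orthogonal to `s`. Since `ρ` annihilates the nine vectors of `S₉` but is nonzero, it suffices that
no nonzero product vector `u ⊗ w` of the `AB:CD` cut is orthogonal to all of `S₉`.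

Write `u = (a' ⊗ b') · x` and `w = (c' ⊗ d') · y` entrywise and list the four entries around the
square `00, 01, 11, 10`. Orthogonality to each of the first eight vectors says that an entry of one
of `x`, `y` vanishes or that two cyclically adjacent entries of the other coincide. If `x` and `y`
are both nonzero, these eight relations force each of them to be constant on its support. Then
`⟨a' b', u⟩` is a nonzero multiple of a sum of positive weights `|a'ᵢ b'ⱼ|²`, likewise
`⟨c' d', w⟩`, contradicting orthogonality to the ninth vector.
-/

open scoped ComplexOrder Matrix

section RangeCriterion

variable {ι κ τ 𝕜 : Type*} [Fintype ι] [RCLike 𝕜]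

lemma star_dotProduct_vecMulVec_mulVec (v s : ι → 𝕜) :
    star s ⬝ᵥ Matrix.vecMulVec v (star v) *ᵥ s = star (star s ⬝ᵥ v) * (star s ⬝ᵥ v) := by
  rw [Matrix.vecMulVec_mulVec, op_smul_eq_smul, dotProduct_smul, smul_eq_mul,
    Matrix.star_dotProduct v s]

lemma star_dotProduct_eq_zero_of_sum_smul_vecMulVec_mulVec_eq_zero [Fintype τ] {q : τ → ℝ}
    (hq : ∀ t, 0 ≤ q t) {v : τ → ι → 𝕜} {s : ι → 𝕜}
    (h : (∑ t, (q t : 𝕜) • Matrix.vecMulVec (v t) (star (v t))) *ᵥ s = 0) {t : τ}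
    (ht : q t ≠ 0) : star s ⬝ᵥ v t = 0 := by
  have hsum : ∑ t, (q t : 𝕜) * (star (star s ⬝ᵥ v t) * (star s ⬝ᵥ v t)) = 0 := by
    simpa only [Matrix.sum_mulVec, dotProduct_sum, Matrix.smul_mulVec, dotProduct_smul,
      star_dotProduct_vecMulVec_mulVec, smul_eq_mul, dotProduct_zero] using congrArg (star s ⬝ᵥ ·) h
  have hterm := (Finset.sum_eq_zero_iff_of_nonneg fun t _ =>
    mul_nonneg (RCLike.ofReal_nonneg.2 (hq t)) (star_mul_self_nonneg _)).1 hsum t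
      (Finset.mem_univ t)
  simpa [ht] using hterm

/-- The matrix `1 - ∑ₖ Sₖ Sₖ*`: for an orthonormal family `S`, the orthogonal projection onto the
complement of its span. -/
def complementProjection [DecidableEq ι] [Fintype κ] (S : κ → ι → 𝕜) : Matrix ι ι 𝕜 :=
  1 - ∑ k, Matrix.vecMulVec (S k) (star (S k))

/-- The family `S` is unextendible within the set `P` of admissible vectors (for an unextendible
product basis, the product vectors): only `0` in `P` is orthogonal to all of `S`. -/
def IsUnextendible (S : κ → ι → 𝕜) (P : Set (ι → 𝕜)) : Prop :=
  ∀ v ∈ P, (∀ k, star (S k) ⬝ᵥ v = 0) → v = 0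

variable [DecidableEq ι] [DecidableEq κ] [Fintype κ] {S : κ → ι → 𝕜}

lemma complementProjection_mulVec_self
    (hS : ∀ i j, star (S i) ⬝ᵥ S j = if i = j then 1 else 0) (k : κ) :
    complementProjection S *ᵥ S k = 0 := by
  simp [complementProjection, Matrix.sub_mulVec, Matrix.sum_mulVec, Matrix.vecMulVec_mulVec, hS]

lemma trace_complementProjection
    (hS : ∀ i j, star (S i) ⬝ᵥ S j = if i = j then 1 else 0) :
    (complementProjection S).trace = Fintype.card ι - Fintype.card κ := by
  simp [complementProjection, Matrix.trace_sub, Matrix.trace_sum, Matrix.trace_vecMulVec,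
    dotProduct_comm _ (star _), hS]

lemma complementProjection_ne_zero
    (hS : ∀ i j, star (S i) ⬝ᵥ S j = if i = j then 1 else 0)
    (hcard : Fintype.card κ ≠ Fintype.card ι) : complementProjection S ≠ 0 := by
  intro h
  have htrace := trace_complementProjection hS
  rw [h, Matrix.trace_zero, eq_comm, sub_eq_zero, Nat.cast_inj] at htrace
  exact hcard htrace.symm

theorem IsUnextendible.smul_complementProjection_ne_sum [Fintype τ] {P : Set (ι → 𝕜)}
    (hP : IsUnextendible S P) (hS : ∀ i j, star (S i) ⬝ᵥ S j = if i = j then 1 else 0)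
    (hcard : Fintype.card κ ≠ Fintype.card ι) {c : 𝕜} (hc : c ≠ 0) {q : τ → ℝ}
    (hq : ∀ t, 0 ≤ q t) {v : τ → ι → 𝕜} (hv : ∀ t, v t ∈ P) :
    c • complementProjection S ≠ ∑ t, (q t : 𝕜) • Matrix.vecMulVec (v t) (star (v t)) := by
  intro h
  refine smul_ne_zero hc (complementProjection_ne_zero hS hcard) ?_
  rw [h]
  refine Finset.sum_eq_zero fun t _ => ?_
  obtain ht | ht := eq_or_ne (q t) 0
  · simp [ht]
  · have hvt : v t = 0 := hP _ (hv t) fun k =>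
      star_dotProduct_eq_zero_of_sum_smul_vecMulVec_mulVec_eq_zero hq
        (by rw [← h, Matrix.smul_mulVec, complementProjection_mulVec_self hS, smul_zero]) ht
    simp [hvt]

end RangeCriterion

section Tensor

variable {ι κ R : Type*}

/-- The product vector `u ⊗ w`, in coordinates. -/
def tensor [Mul R] (u : ι → R) (w : κ → R) : ι × κ → R := fun p => u p.1 * w p.2

lemma tensor_ne_zero [MulZeroClass R] [NoZeroDivisors R] {u : ι → R} {w : κ → R}
    (hu : ∀ i, u i ≠ 0) (hw : ∀ k, w k ≠ 0) (p : ι × κ) : tensor u w p ≠ 0 :=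
  mul_ne_zero (hu p.1) (hw p.2)

variable [CommSemiring R] [StarRing R] [Fintype ι] [Fintype κ]

lemma star_single_dotProduct [DecidableEq ι] (i : ι) (v : ι → R) :
    star (Pi.single i 1) ⬝ᵥ v = v i := by
  rw [← Pi.single_star, star_one, single_one_dotProduct]

lemma star_tensor_dotProduct (u : ι → R) (w : κ → R) (v : ι × κ → R) :
    star (tensor u w) ⬝ᵥ v = star u ⬝ᵥ fun i => star w ⬝ᵥ fun k => v (i, k) := by
  simp only [dotProduct, tensor, Pi.star_apply, star_mul', Fintype.sum_prod_type, Finset.mul_sum,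
    mul_assoc]

lemma star_tensor_dotProduct_comm (u : ι → R) (w : κ → R) (v : ι × κ → R) :
    star (tensor u w) ⬝ᵥ v = star w ⬝ᵥ fun k => star u ⬝ᵥ fun i => v (i, k) := by
  simp only [dotProduct, tensor, Pi.star_apply, star_mul', Fintype.sum_prod_type_right,
    Finset.mul_sum, mul_assoc, mul_left_comm (star (w _))]

lemma star_tensor_dotProduct_tensor (u u' : ι → R) (w w' : κ → R) :
    star (tensor u w) ⬝ᵥ tensor u' w' = (star u ⬝ᵥ u') * (star w ⬝ᵥ w') := by
  simp only [dotProduct, tensor, Pi.star_apply, star_mul', Fintype.sum_mul_sum,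
    Fintype.sum_prod_type, mul_mul_mul_comm]

end Tensor

lemma exists_eq_mul_of_forall_ne_zero {ι F : Type*} [Field F] {f : ι → F} (hf : ∀ i, f i ≠ 0)
    (u : ι → F) : ∃ x, u = f * x :=
  ⟨fun i => u i / f i, funext fun i => (mul_div_cancel₀ (u i) (hf i)).symm⟩

-- For `c` the value of `x` on its support, `c̄ x = x̄ x`, so `c̄ ⟨f, f x⟩ = ‖f x‖²`.
lemma eq_zero_of_star_dotProduct_mul_eq_zero {ι 𝕜 : Type*} [Fintype ι] [RCLike 𝕜] {f x : ι → 𝕜}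
    (hf : ∀ i, f i ≠ 0) (hx : ∃ c, ∀ i, x i = 0 ∨ x i = c) (h : star f ⬝ᵥ (f * x) = 0) :
    x = 0 := by
  obtain ⟨c, hc⟩ := hx
  have hnorm : star (f * x) ⬝ᵥ (f * x) = star c * (star f ⬝ᵥ (f * x)) := by
    simp only [dotProduct, Finset.mul_sum, Pi.star_apply, Pi.mul_apply, star_mul']
    refine Finset.sum_congr rfl fun i _ => ?_
    rcases hc i with hi | hi <;> rw [hi]
    · simp
    · ring
  rw [h, mul_zero, dotProduct_star_self_eq_zero] at hnorm
  exact funext fun i => (mul_eq_zero.1 (congrFun hnorm i)).resolve_left (hf i)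

/-- The relations that orthogonality to the first eight vectors of `S9` imposes on the rescaled
`AB` amplitudes `x` and `CD` amplitudes `y`, listed cyclically as in `squareCycle`. -/
structure CyclicRelations {R : Type*} [Zero R] (x y : Fin 4 → R) : Prop where
  left : ∀ i, y i = 0 ∨ x (i + 3) = x i
  right : ∀ i, x i = 0 ∨ y (i + 2) = y (i + 3)

namespace CyclicRelations

variable {R : Type*} [Zero R] {x y : Fin 4 → R}

lemma symm (h : CyclicRelations x y) : CyclicRelations y fun i => x (i + 1) where
  left i := by simpa [add_assoc] using h.right (i + 1)
  right i := by simpa [add_assoc, eq_comm] using h.left i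

lemma rotate (h : CyclicRelations x y) (k : Fin 4) :
    CyclicRelations (fun i => x (i + k)) fun i => y (i + k) where
  left i := by simpa only [add_right_comm] using h.left (i + k)
  right i := by simpa only [add_right_comm] using h.right (i + k)

lemma exists_left_eq_zero_or_eq_of_apply_zero_ne_zero (h : CyclicRelations x y) (hy : y 0 ≠ 0) :
    ∃ c, ∀ i, x i = 0 ∨ x i = c := by
  have hx30 : x 3 = x 0 := (h.left 0).resolve_left hy
  by_cases hx0 : x 0 = 0
  · by_cases hx1 : x 1 = 0
    · exact ⟨x 2, by simp [Fin.forall_fin_succ, hx0, hx1, hx30]⟩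
    · have hy30 : y 3 = y 0 := (h.right 1).resolve_left hx1
      have hx23 : x 2 = x 3 := (h.left 3).resolve_left (hy30 ▸ hy)
      exact ⟨x 1, by simp [Fin.forall_fin_succ, hx0, hx23, hx30]⟩
  · have hy23 : y 2 = y 3 := (h.right 0).resolve_left hx0
    have hy12 : y 1 = y 2 := (h.right 3).resolve_left (hx30 ▸ hx0)
    by_cases hy1 : y 1 = 0
    · have hx1 : x 1 = 0 := (h.right 1).resolve_right fun hy30 : y 3 = y 0 =>
        hy (by rw [← hy30, ← hy23, ← hy12, hy1])
      have hx2 : x 2 = 0 := (h.right 2).resolve_right fun hy01 : y 0 = y 1 => hy (hy01.trans hy1)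
      exact ⟨x 0, by simp [Fin.forall_fin_succ, hx1, hx2, hx30]⟩
    · have hx01 : x 0 = x 1 := (h.left 1).resolve_left hy1
      have hx12 : x 1 = x 2 := (h.left 2).resolve_left (hy12 ▸ hy1)
      exact ⟨x 0, by simp [Fin.forall_fin_succ, hx30, ← hx12, ← hx01]⟩

lemma exists_left_eq_zero_or_eq (h : CyclicRelations x y) (hy : y ≠ 0) :
    ∃ c, ∀ i, x i = 0 ∨ x i = c := by
  obtain ⟨k, hk⟩ := Function.ne_iff.1 hy
  obtain ⟨c, hc⟩ := (h.rotate k).exists_left_eq_zero_or_eq_of_apply_zero_ne_zero (by simpa using hk)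
  exact ⟨c, fun i => by simpa using hc (i - k)⟩

lemma exists_right_eq_zero_or_eq (h : CyclicRelations x y) (hx : x ≠ 0) :
    ∃ c, ∀ i, y i = 0 ∨ y i = c :=
  h.symm.exists_left_eq_zero_or_eq fun h0 =>
    hx (funext fun i => by simpa using congrFun h0 (i - 1))

end CyclicRelations

/-- The vertices of the square `{0, 1} × {0, 1}` in cyclic order. -/
def squareCycle : Fin 4 → Fin 2 × Fin 2 := ![(0, 0), (0, 1), (1, 1), (1, 0)]

lemma squareCycle_surjective : Function.Surjective squareCycle := by decide

section Qubit

lemma ket0_eq_single : ket0 = Pi.single 0 1 := by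
  ext i; fin_cases i <;> simp [ket0]

lemma ket1_eq_single : ket1 = Pi.single 1 1 := by
  ext i; fin_cases i <;> simp [ket1]

lemma star_vk (t : ℝ) : star (vk t) = vk t := by
  ext i; fin_cases i <;> simp [vk, ← Complex.cos_conj, ← Complex.sin_conj]

lemma star_vk' (t : ℝ) : star (vk' t) = vk' t := by
  ext i; fin_cases i <;> simp [vk', ← Complex.cos_conj, ← Complex.sin_conj]

lemma star_vk_dotProduct_vk (t : ℝ) : star (vk t) ⬝ᵥ vk t = 1 := by
  rw [star_vk]
  simp [vk, ← sq]

lemma star_vk'_dotProduct_vk' (t : ℝ) : star (vk' t) ⬝ᵥ vk' t = 1 := by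
  rw [star_vk']
  simp [vk', ← sq]

lemma star_vk_dotProduct_vk' (t : ℝ) : star (vk t) ⬝ᵥ vk' t = 0 := by
  rw [star_vk]
  simp [vk, vk', mul_comm]

lemma star_vk'_dotProduct_vk (t : ℝ) : star (vk' t) ⬝ᵥ vk t = 0 := by
  rw [star_vk']
  simp [vk, vk', mul_comm]

variable {t : ℝ}

lemma vk'_ne_zero (ht : Real.sin (2 * t) ≠ 0) (i : Fin 2) : vk' t i ≠ 0 := by
  have ht' : Complex.sin t ≠ 0 ∧ Complex.cos t ≠ 0 := by
    rw [Real.sin_two_mul] at ht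
    exact_mod_cast And.intro (right_ne_zero_of_mul (left_ne_zero_of_mul ht))
      (right_ne_zero_of_mul ht)
  fin_cases i <;> simp [vk', ht']

lemma star_vk_dotProduct_vk'_mul (t : ℝ) (f : Fin 2 → ℂ) :
    star (vk t) ⬝ᵥ (vk' t * f) = vk' t 0 * -vk' t 1 * (f 0 - f 1) := by
  rw [star_vk]
  simp only [dotProduct, vk, vk', Pi.mul_apply, Fin.sum_univ_two, Matrix.cons_val_zero,
    Matrix.cons_val_one, Matrix.cons_val_fin_one]
  ring

lemma star_vk_dotProduct_vk'_mul_eq_zero_iff (ht : Real.sin (2 * t) ≠ 0) (f : Fin 2 → ℂ) :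
    star (vk t) ⬝ᵥ (vk' t * f) = 0 ↔ f 0 = f 1 := by
  rw [star_vk_dotProduct_vk'_mul]
  simp [vk'_ne_zero ht, sub_eq_zero]

lemma star_tensor_single_single_dotProduct_mul_eq_zero_iff {f : Fin 2 × Fin 2 → ℂ}
    (hf : ∀ p, f p ≠ 0) (i j : Fin 2) (x : Fin 2 × Fin 2 → ℂ) :
    star (tensor (Pi.single i 1) (Pi.single j 1)) ⬝ᵥ (f * x) = 0 ↔ x (i, j) = 0 := by
  simp only [star_tensor_dotProduct, star_single_dotProduct, Pi.mul_apply, mul_eq_zero, hf,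
    false_or]

lemma star_tensor_single_vk_dotProduct_mul_eq_zero_iff {a : Fin 2 → ℂ} {i : Fin 2} (ha : a i ≠ 0)
    (ht : Real.sin (2 * t) ≠ 0) (x : Fin 2 × Fin 2 → ℂ) :
    star (tensor (Pi.single i 1) (vk t)) ⬝ᵥ (tensor a (vk' t) * x) = 0 ↔
      x (i, 0) = x (i, 1) := by
  have hrow : (fun k => (tensor a (vk' t) * x) (i, k)) = a i • (vk' t * fun k => x (i, k)) :=
    funext fun k => mul_assoc _ _ _
  rw [star_tensor_dotProduct, star_single_dotProduct, hrow, dotProduct_smul,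
    smul_eq_zero_iff_right ha, star_vk_dotProduct_vk'_mul_eq_zero_iff ht]

lemma star_tensor_vk_single_dotProduct_mul_eq_zero_iff {b : Fin 2 → ℂ} {j : Fin 2} (hb : b j ≠ 0)
    (ht : Real.sin (2 * t) ≠ 0) (x : Fin 2 × Fin 2 → ℂ) :
    star (tensor (vk t) (Pi.single j 1)) ⬝ᵥ (tensor (vk' t) b * x) = 0 ↔
      x (0, j) = x (1, j) := by
  have hcol : (fun i => (tensor (vk' t) b * x) (i, j)) = b j • (vk' t * fun i => x (i, j)) :=
    funext fun i => by simp only [tensor, Pi.mul_apply, Pi.smul_apply, smul_eq_mul]; ring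
  rw [star_tensor_dotProduct_comm, star_single_dotProduct, hcol, dotProduct_smul,
    smul_eq_zero_iff_right hb, star_vk_dotProduct_vk'_mul_eq_zero_iff ht]

end Qubit

section FourQubits

/-- The vector `u ⊗ w` with `u` in the qubits `AB` and `w` in the qubits `CD`. -/
def bipartite (u w : Fin 2 × Fin 2 → ℂ) : Q4 → ℂ := fun p => u (p.1, p.2.1) * w (p.2.2.1, p.2.2.2)

lemma pv_eq_bipartite (x y z w : Fin 2 → ℂ) :
    pv x y z w = bipartite (tensor x y) (tensor z w) :=
  funext fun _ => mul_assoc _ _ _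

lemma star_bipartite_dotProduct_bipartite (u w u' w' : Fin 2 × Fin 2 → ℂ) :
    star (bipartite u w) ⬝ᵥ bipartite u' w' = (star u ⬝ᵥ u') * (star w ⬝ᵥ w') := by
  rw [← star_tensor_dotProduct_tensor]
  exact Fintype.sum_equiv (Equiv.prodAssoc ..).symm _ _ fun _ => rfl

lemma star_pv_dotProduct_pv (x y z w x' y' z' w' : Fin 2 → ℂ) :
    star (pv x y z w) ⬝ᵥ pv x' y' z' w' =
      (star x ⬝ᵥ x') * (star y ⬝ᵥ y') * ((star z ⬝ᵥ z') * (star w ⬝ᵥ w')) := by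
  simp only [pv_eq_bipartite, star_bipartite_dotProduct_bipartite, star_tensor_dotProduct_tensor]

lemma S9_orthonormal (α β γ δ : ℝ) (i j : Fin 9) :
    star (S9 α β γ δ i) ⬝ᵥ S9 α β γ δ j = if i = j then 1 else 0 := by
  fin_cases i <;> fin_cases j <;>
    simp [-Matrix.vec2_dotProduct, S9, star_pv_dotProduct_pv, ket0_eq_single, ket1_eq_single,
      star_vk_dotProduct_vk, star_vk'_dotProduct_vk', star_vk_dotProduct_vk',
      star_vk'_dotProduct_vk]

variable {α β γ δ : ℝ}

lemma forall_star_S9_dotProduct_eq_zero_iff (hα : Real.sin (2 * α) ≠ 0)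
    (hβ : Real.sin (2 * β) ≠ 0) (hγ : Real.sin (2 * γ) ≠ 0) (hδ : Real.sin (2 * δ) ≠ 0)
    (x y : Fin 2 × Fin 2 → ℂ) :
    (∀ k, star (S9 α β γ δ k) ⬝ᵥ
      bipartite (tensor (vk' α) (vk' β) * x) (tensor (vk' γ) (vk' δ) * y) = 0) ↔
    (x (0, 0) = 0 ∨ y (1, 0) = y (1, 1)) ∧ (x (0, 1) = 0 ∨ y (0, 0) = y (1, 0)) ∧
    (x (0, 0) = x (0, 1) ∨ y (0, 1) = 0) ∧ (x (1, 1) = 0 ∨ y (0, 0) = y (0, 1)) ∧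
    (x (1, 0) = x (1, 1) ∨ y (1, 0) = 0) ∧ (x (1, 0) = 0 ∨ y (0, 1) = y (1, 1)) ∧
    (x (0, 0) = x (1, 0) ∨ y (0, 0) = 0) ∧ (x (0, 1) = x (1, 1) ∨ y (1, 1) = 0) ∧
    (star (tensor (vk' α) (vk' β)) ⬝ᵥ (tensor (vk' α) (vk' β) * x) = 0 ∨
      star (tensor (vk' γ) (vk' δ)) ⬝ᵥ (tensor (vk' γ) (vk' δ) * y) = 0) := by
  have hab := tensor_ne_zero (vk'_ne_zero hα) (vk'_ne_zero hβ)
  have hcd := tensor_ne_zero (vk'_ne_zero hγ) (vk'_ne_zero hδ)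
  simp [-Matrix.vec2_dotProduct, Fin.forall_fin_succ, S9, pv_eq_bipartite,
    star_bipartite_dotProduct_bipartite, ket0_eq_single, ket1_eq_single,
    star_tensor_single_single_dotProduct_mul_eq_zero_iff hab,
    star_tensor_single_single_dotProduct_mul_eq_zero_iff hcd,
    star_tensor_single_vk_dotProduct_mul_eq_zero_iff,
    star_tensor_vk_single_dotProduct_mul_eq_zero_iff, vk'_ne_zero, hα, hβ, hγ, hδ]

theorem S9_isUnextendible (hα : Real.sin (2 * α) ≠ 0) (hβ : Real.sin (2 * β) ≠ 0)
    (hγ : Real.sin (2 * γ) ≠ 0) (hδ : Real.sin (2 * δ) ≠ 0) :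
    IsUnextendible (S9 α β γ δ) {v | ∃ u w, v = bipartite u w} := by
  rintro _ ⟨u, w, rfl⟩ h
  have hab := tensor_ne_zero (vk'_ne_zero hα) (vk'_ne_zero hβ)
  have hcd := tensor_ne_zero (vk'_ne_zero hγ) (vk'_ne_zero hδ)
  obtain ⟨x, rfl⟩ := exists_eq_mul_of_forall_ne_zero hab u
  obtain ⟨y, rfl⟩ := exists_eq_mul_of_forall_ne_zero hcd w
  obtain ⟨h0, h1, h2, h3, h4, h5, h6, h7, h8⟩ :=
    (forall_star_S9_dotProduct_eq_zero_iff hα hβ hγ hδ x y).1 h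
  have hxy : CyclicRelations (x ∘ squareCycle) (y ∘ squareCycle) :=
    { left := by
        simpa [Fin.forall_fin_succ, squareCycle] using
          ⟨h6.symm.imp_right Eq.symm, h2.symm, h7.symm, h4.symm.imp_right Eq.symm⟩
      right := by
        simpa [Fin.forall_fin_succ, squareCycle] using
          ⟨h0.imp_right Eq.symm, h1.imp_right Eq.symm, h3, h5⟩ }
  have hcomp {z : Fin 2 × Fin 2 → ℂ} (hz : z ≠ 0) : z ∘ squareCycle ≠ 0 :=
    squareCycle_surjective.injective_comp_right.ne hz
  rcases h8 with h8 | h8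
  · obtain rfl | hy := eq_or_ne y 0
    · ext; simp [bipartite]
    · have hx : ∃ c, ∀ p, x p = 0 ∨ x p = c :=
        (hxy.exists_left_eq_zero_or_eq (hcomp hy)).imp fun _ => squareCycle_surjective.forall.2
      rw [eq_zero_of_star_dotProduct_mul_eq_zero hab hx h8]
      ext; simp [bipartite]
  · obtain rfl | hx := eq_or_ne x 0
    · ext; simp [bipartite]
    · have hy : ∃ c, ∀ p, y p = 0 ∨ y p = c :=
        (hxy.exists_right_eq_zero_or_eq (hcomp hx)).imp fun _ => squareCycle_surjective.forall.2
      rw [eq_zero_of_star_dotProduct_mul_eq_zero hcd hy h8]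
      ext; simp [bipartite]

theorem rho_ne_sum_bipartite (hα : Real.sin (2 * α) ≠ 0) (hβ : Real.sin (2 * β) ≠ 0)
    (hγ : Real.sin (2 * γ) ≠ 0) (hδ : Real.sin (2 * δ) ≠ 0) {τ : Type*} [Fintype τ] {q : τ → ℝ}
    (hq : ∀ t, 0 ≤ q t) (u w : τ → Fin 2 × Fin 2 → ℂ) :
    rho α β γ δ ≠ ∑ t, (q t : ℂ) • rankOne (bipartite (u t) (w t)) :=
  (S9_isUnextendible hα hβ hγ hδ).smul_complementProjection_ne_sum (S9_orthonormal α β γ δ)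
    (by simp) (by simp) hq fun t => ⟨u t, w t, rfl⟩

lemma sin_two_mul_ne_zero_of_mem_Ioo {t : ℝ} (ht : t ∈ Set.Ioo 0 (Real.pi / 2)) :
    Real.sin (2 * t) ≠ 0 :=
  (Real.sin_pos_of_mem_Ioo ⟨by linarith [ht.1], by linarith [ht.2]⟩).ne'

end FourQubits

theorem stmt17_general (α β γ δ : ℝ) (hα : Real.sin (2 * α) ≠ 0) (hβ : Real.sin (2 * β) ≠ 0)
    (hγ : Real.sin (2 * γ) ≠ 0) (hδ : Real.sin (2 * δ) ≠ 0) :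
    (¬ ∃ (n : ℕ) (q : Fin n → ℝ) (u w : Fin n → Fin 2 × Fin 2 → ℂ),
      (∀ t, 0 ≤ q t) ∧
      rho α β γ δ =
        ∑ t, (q t : ℂ) • rankOne (fun p : Q4 => u t (p.1, p.2.1) * w t (p.2.2.1, p.2.2.2))) ∧
    (¬ ∃ (n : ℕ) (q : Fin n → ℝ) (a b : Fin n → Fin 2 → ℂ) (w : Fin n → Fin 2 × Fin 2 → ℂ),
      (∀ t, 0 ≤ q t) ∧
      rho α β γ δ =
        ∑ t, (q t : ℂ) • rankOne (fun p : Q4 => a t p.1 * b t p.2.1 * w t (p.2.2.1, p.2.2.2))) ∧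
    (¬ ∃ (n : ℕ) (q : Fin n → ℝ) (a b c d : Fin n → Fin 2 → ℂ),
      (∀ t, 0 ≤ q t) ∧
      rho α β γ δ = ∑ t, (q t : ℂ) • rankOne (pv (a t) (b t) (c t) (d t))) := by
  refine ⟨?_, ?_, ?_⟩
  · rintro ⟨n, q, u, w, hq, h⟩
    exact rho_ne_sum_bipartite hα hβ hγ hδ hq u w h
  · rintro ⟨n, q, a, b, w, hq, h⟩
    exact rho_ne_sum_bipartite hα hβ hγ hδ hq (fun t => tensor (a t) (b t)) w h
  · rintro ⟨n, q, a, b, c, d, hq, h⟩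
    simp only [pv_eq_bipartite] at h
    exact rho_ne_sum_bipartite hα hβ hγ hδ hq _ _ h

/-- `ρ` is entangled across the `AB:CD` bipartition: it admits no decomposition as a
nonnegative combination of rank-one projectors onto `AB:CD` product vectors.
Consequently it is also entangled across the `A:B:CD` grouping and as a 4-qubit
state. -/
theorem stmt17 (α β γ δ : ℝ) (hα : α ∈ Set.Ioo 0 (Real.pi / 2))
    (hβ : β ∈ Set.Ioo 0 (Real.pi / 2)) (hγ : γ ∈ Set.Ioo 0 (Real.pi / 2))
    (hδ : δ ∈ Set.Ioo 0 (Real.pi / 2)) :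
    (¬ ∃ (n : ℕ) (q : Fin n → ℝ) (u w : Fin n → Fin 2 × Fin 2 → ℂ),
      (∀ t, 0 ≤ q t) ∧
      rho α β γ δ =
        ∑ t, (q t : ℂ) • rankOne (fun p : Q4 => u t (p.1, p.2.1) * w t (p.2.2.1, p.2.2.2))) ∧
    (¬ ∃ (n : ℕ) (q : Fin n → ℝ) (a b : Fin n → Fin 2 → ℂ) (w : Fin n → Fin 2 × Fin 2 → ℂ),
      (∀ t, 0 ≤ q t) ∧
      rho α β γ δ =
        ∑ t, (q t : ℂ) • rankOne (fun p : Q4 => a t p.1 * b t p.2.1 * w t (p.2.2.1, p.2.2.2))) ∧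
    (¬ ∃ (n : ℕ) (q : Fin n → ℝ) (a b c d : Fin n → Fin 2 → ℂ),
      (∀ t, 0 ≤ q t) ∧
      rho α β γ δ = ∑ t, (q t : ℂ) • rankOne (pv (a t) (b t) (c t) (d t))) :=
  stmt17_general α β γ δ (sin_two_mul_ne_zero_of_mem_Ioo hα) (sin_two_mul_ne_zero_of_mem_Ioo hβ)
    (sin_two_mul_ne_zero_of_mem_Ioo hγ) (sin_two_mul_ne_zero_of_mem_Ioo hδ)
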